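/- Let K be a number field with ring of integers O_K. There exists a unit u in O_K^* such that K = ℚ(u^k) for every positive integer k, if and only if K is not a CM field. -/

import Mathlib

open NumberField

/-- Subgroup of units having a positive power in `F`. -/
def powUnits (K : Type*) [Field K] (F : Subfield K) : Subgroup (𝓞 K)ˣ where
  carrier := {u | ∃ k : ℕ, 0 < k ∧ (algebraMap (𝓞 K) K (u : 𝓞 K)) ^ k ∈ F}
  one_mem' := ⟨1, one_pos, by simp⟩
  mul_mem' := by
    rintro a b ⟨k, hk, ha⟩ ⟨l, hl, hb⟩
    refine ⟨k * l, Nat.mul_pos hk hl, ?_⟩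
    have h1 := pow_mem ha l
    have h2 := pow_mem hb k
    rw [← pow_mul] at h1 h2
    rw [Units.val_mul, map_mul, mul_pow]
    rw [mul_comm l k] at h2
    exact mul_mem h1 h2
  inv_mem' := by
    rintro a ⟨k, hk, ha⟩
    refine ⟨k, hk, ?_⟩
    have h : algebraMap (𝓞 K) K ((a⁻¹ : (𝓞 K)ˣ) : 𝓞 K) = (algebraMap (𝓞 K) K (a : 𝓞 K))⁻¹ := by
      apply eq_inv_of_mul_eq_one_left
      rw [← map_mul, Units.inv_mul, map_one]
    rw [h, inv_pow]
    exact inv_mem ha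

theorem place_eq_of_comap_eq (K : Type*) [Field K] [NumberField K] (F : Subfield K)
    (h : ∀ u : (𝓞 K)ˣ, u ∈ powUnits K F) (w₁ w₂ : InfinitePlace K)
    (hw : ∀ x ∈ F, w₁ x = w₂ x) : w₁ = w₂ := by
  by_contra hne
  obtain ⟨u, hu⟩ := Units.dirichletUnitTheorem.exists_unit K w₁
  obtain ⟨k, hk, hmem⟩ := h u
  have h1 := hw _ hmem
  rw [map_pow, map_pow] at h1
  have h2 : w₁ (algebraMap (𝓞 K) K (u : 𝓞 K)) = w₂ (algebraMap (𝓞 K) K (u : 𝓞 K)) :=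
    (pow_left_inj₀ (apply_nonneg _ _) (apply_nonneg _ _) hk.ne').1 h1
  have hall : ∀ w : InfinitePlace K, Real.log (w (algebraMap (𝓞 K) K (u : 𝓞 K))) < 0 := by
    intro w
    by_cases hww : w = w₁
    · rw [hww, h2]; exact hu w₂ (Ne.symm hne)
    · exact hu w hww
  have hs := Units.sum_mult_mul_log u
  have : ∑ w : InfinitePlace K, (w.mult : ℝ) * Real.log (w (algebraMap (𝓞 K) K (u : 𝓞 K))) < 0 := by
    apply Finset.sum_neg
    · intro w _
      exact mul_neg_of_pos_of_neg (by exact_mod_cast InfinitePlace.mult_pos) (hall w)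
    · exact ⟨w₁, Finset.mem_univ _⟩
  exact absurd hs this.ne

theorem cm_of_powUnits (K : Type*) [Field K] [NumberField K] (F : Subfield K) (hF : F ≠ ⊤)
    (h : ∀ u : (𝓞 K)ˣ, u ∈ powUnits K F) :
    (∀ φ : F →+* ℂ, NumberField.ComplexEmbedding.IsReal φ) ∧
          (∀ ψ : K →+* ℂ, ¬ NumberField.ComplexEmbedding.IsReal ψ) ∧
          Module.finrank F K = 2 := by
  have : FiniteDimensional F K := Module.Finite.of_restrictScalars_finite ℚ F K
  have hpos : 0 < Module.finrank F K := Module.finrank_pos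
  have hne1 : Module.finrank F K ≠ 1 := by
    intro h1
    apply hF
    have hb := (Subalgebra.bot_eq_top_iff_finrank_eq_one (F := F) (E := K)).2 h1
    rw [eq_top_iff]
    intro x _
    have hx : x ∈ (⊥ : Subalgebra F K) := hb ▸ Algebra.mem_top
    obtain ⟨y, rfl⟩ := Algebra.mem_bot.1 hx
    exact y.2
  -- any two embeddings agreeing on `F` are equal or conjugate
  have key : ∀ ψ₁ ψ₂ : K →+* ℂ, (∀ x ∈ F, ψ₁ x = ψ₂ x) →
      ψ₁ = ψ₂ ∨ ComplexEmbedding.conjugate ψ₁ = ψ₂ := by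
    intro ψ₁ ψ₂ hx
    rw [← InfinitePlace.mk_eq_iff]
    apply place_eq_of_comap_eq K F h
    intro x hxF
    rw [InfinitePlace.apply, InfinitePlace.apply, hx x hxF]
  have main : ∀ φ : F →+* ℂ, Module.finrank F K ≤ 2 ∧ ComplexEmbedding.IsReal φ ∧
      ∀ ψ : K →+* ℂ, ψ.comp (algebraMap F K) = φ → ¬ ComplexEmbedding.IsReal ψ := by
    intro φ
    let _ : Algebra F ℂ := φ.toAlgebra
    have hcard := AlgHom.card F K ℂ
    have agree : ∀ a b : K →ₐ[F] ℂ, ∀ x ∈ F, (a : K →+* ℂ) x = (b : K →+* ℂ) x := by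
      intro a b x hx
      exact (a.commutes ⟨x, hx⟩).trans (b.commutes ⟨x, hx⟩).symm
    have alt : ∀ a b : K →ₐ[F] ℂ, a ≠ b →
        ComplexEmbedding.conjugate (a : K →+* ℂ) = (b : K →+* ℂ) := by
      intro a b hab
      refine (key _ _ (agree a b)).resolve_left fun he => hab ?_
      ext x
      exact congrArg (fun f : K →+* ℂ => f x) he
    have other : ∀ a : K →ₐ[F] ℂ, ∃ b, a ≠ b := by
      intro a
      have : 1 < Fintype.card (K →ₐ[F] ℂ) := by omega
      obtain ⟨b, hb⟩ := Fintype.exists_ne_of_one_lt_card this a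
      exact ⟨b, hb.symm⟩
    refine ⟨?_, ?_, ?_⟩
    · by_contra hlt
      have : 2 < Fintype.card (K →ₐ[F] ℂ) := by omega
      obtain ⟨a, b, c, hab, hac, hbc⟩ := Fintype.two_lt_card_iff.1 this
      apply hbc
      have he := (alt a b hab).symm.trans (alt a c hac)
      ext x
      exact congrArg (fun f : K →+* ℂ => f x) he
    · have : 0 < Fintype.card (K →ₐ[F] ℂ) := by omega
      obtain ⟨a⟩ := Fintype.card_pos_iff.1 this
      obtain ⟨b, hab⟩ := other a
      have he := alt a b hab
      rw [ComplexEmbedding.isReal_iff]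
      ext x
      have e1 : (a : K →+* ℂ) (x : K) = φ x := a.commutes x
      have e2 : (b : K →+* ℂ) (x : K) = φ x := b.commutes x
      have e3 := congrArg (fun f : K →+* ℂ => f (x : K)) he
      simp only [ComplexEmbedding.conjugate_coe_eq] at e3 ⊢
      rw [e1, e2] at e3
      exact e3
    · intro ψ hψ hreal
      let a : K →ₐ[F] ℂ := { ψ with commutes' := fun x => congrArg (fun f : F →+* ℂ => f x) hψ }
      obtain ⟨b, hab⟩ := other a
      have he := alt a b hab
      apply hab
      rw [ComplexEmbedding.isReal_iff] at hreal
      have ha : (a : K →+* ℂ) = ψ := rfl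
      rw [ha, hreal] at he
      ext x
      exact congrArg (fun f : K →+* ℂ => f x) he
  refine ⟨fun φ => (main φ).2.1, fun ψ => (main _).2.2 ψ rfl, ?_⟩
  obtain ⟨φ⟩ : Nonempty (K →+* ℂ) := inferInstance
  have := (main (φ.comp (algebraMap F K))).1
  omega

theorem not_unit_of_cm (K : Type*) [Field K] [NumberField K] [IsCMField K] (u : (𝓞 K)ˣ) :
    ∃ k : ℕ, 0 < k ∧
      Subfield.closure {algebraMap (𝓞 K) K ((u : 𝓞 K) ^ k)} ≠ (⊤ : Subfield K) := by
  refine ⟨Nat.card (Units.torsion K), Nat.card_pos, fun htop => ?_⟩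
  have hu : u ^ Nat.card (Units.torsion K) ∈ IsCMField.realUnits K := by
    rw [← IsCMField.unitsMulComplexConjInv_ker, MonoidHom.mem_ker, map_pow, pow_card_eq_one']
  rw [IsCMField.mem_realUnits_iff] at hu
  obtain ⟨v, hv⟩ := hu
  have hle : Subfield.closure {algebraMap (𝓞 K) K ((u : 𝓞 K) ^ Nat.card (Units.torsion K))}
      ≤ maximalRealSubfield K := by
    rw [Subfield.closure_le, Set.singleton_subset_iff]
    rw [← Units.val_pow_eq_pow_val, ← hv]
    exact (algebraMap (𝓞 (maximalRealSubfield K)) (maximalRealSubfield K)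
      (v : 𝓞 (maximalRealSubfield K))).2
  rw [htop, top_le_iff] at hle
  have h2 := Algebra.IsQuadraticExtension.finrank_eq_two (maximalRealSubfield K) K
  have hb : (⊥ : Subalgebra (maximalRealSubfield K) K) = ⊤ := by
    rw [eq_top_iff]
    intro x _
    exact Algebra.mem_bot.2 ⟨⟨x, hle ▸ Subfield.mem_top x⟩, rfl⟩
  rw [Subalgebra.bot_eq_top_iff_finrank_eq_one] at hb
  omega

theorem finite_subfields (K : Type*) [Field K] [NumberField K] : Finite (Subfield K) := by
  have : Finite (IntermediateField ℚ K) :=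
    (Field.exists_primitive_element_iff_finite_intermediateField ℚ K).1
      ⟨inferInstance, Field.exists_primitive_element ℚ K⟩
  refine Finite.of_surjective (IntermediateField.toSubfield : IntermediateField ℚ K → _) ?_
  intro F
  exact ⟨F.toIntermediateField (fun q => by simp), rfl⟩

/-- There exists a unit `u ∈ 𝓞_K^*` with `K = ℚ(u^k)` for every positive integer `k`
if and only if `K` is not a CM field (a totally imaginary quadratic extension of a
totally real subfield). -/
theorem stmt_11 (K : Type*) [Field K] [NumberField K] :
    (∃ u : (𝓞 K)ˣ, ∀ k : ℕ, 0 < k →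
        Subfield.closure {algebraMap (𝓞 K) K ((u : 𝓞 K) ^ k)} = (⊤ : Subfield K)) ↔
      ¬ ∃ F : Subfield K,
          (∀ φ : F →+* ℂ, NumberField.ComplexEmbedding.IsReal φ) ∧
          (∀ ψ : K →+* ℂ, ¬ NumberField.ComplexEmbedding.IsReal ψ) ∧
          Module.finrank F K = 2 := by
  constructor
  · rintro ⟨u, hu⟩ ⟨F, h1, h2, h3⟩
    have : IsTotallyReal F := ⟨fun v => ⟨v.embedding, h1 _, v.mk_embedding⟩⟩
    have : IsTotallyComplex K := ⟨fun v => ⟨v.embedding, h2 _, v.mk_embedding⟩⟩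
    have : Algebra.IsQuadraticExtension F K := ⟨h3⟩
    have : IsCMField K := IsCMField.ofCMExtension F K
    obtain ⟨k, hk, hne⟩ := not_unit_of_cm K u
    exact hne (hu k hk)
  · intro hcm
    by_contra hno
    push Not at hno
    have := finite_subfields K
    classical
    have := Fintype.ofFinite (Subfield K)
    let s : Finset (Subfield K) := Finset.univ.filter (· ≠ ⊤)
    have hcov : open scoped Pointwise in
        ⋃ F ∈ s, (1 : (𝓞 K)ˣ) • (powUnits K F : Set (𝓞 K)ˣ) = Set.univ := by
      rw [Set.eq_univ_iff_forall]
      intro u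
      obtain ⟨k, hk, hne⟩ := hno u
      simp only [Set.mem_iUnion]
      refine ⟨_, Finset.mem_filter.2 ⟨Finset.mem_univ _, hne⟩, u, ⟨k, hk, ?_⟩, one_mul u⟩
      rw [← map_pow]
      exact Subfield.subset_closure rfl
    obtain ⟨F, hFs, hfin⟩ := Subgroup.exists_finiteIndex_of_leftCoset_cover hcov
    refine hcm ⟨F, cm_of_powUnits K F (Finset.mem_filter.1 hFs).2 fun u => ?_⟩
    obtain ⟨k, hk, hmem⟩ := Subgroup.pow_index_mem (powUnits K F) u
    refine ⟨(powUnits K F).index * k, Nat.mul_pos (Nat.pos_of_ne_zero hfin.index_ne_zero) hk, ?_⟩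
    rw [Units.val_pow_eq_pow_val, map_pow, ← pow_mul] at hmem
    exact hmem
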